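/- U is a two-sided ideal of the Terwilliger algebra T(x₀): for every T ∈ T(x₀) and every u ∈ U, both T u ∈ U and u T ∈ U. Moreover the quotient algebra T(x₀)/U is commutative, i.e., S T − T S ∈ U for all S, T ∈ T(x₀). -/

import Mathlib

open Finset Matrix

/-- Vertex set of the wreath product `K_{n 0} ≀ K_{n 1} ≀ ⋯ ≀ K_{n (d-1)}`
(paper indices `n_1, …, n_d` correspond to `n 0, …, n (d-1)`). -/
abbrev Vx (d : ℕ) (n : ℕ → ℕ) : Type := (i : Fin d) → Fin (n i)

/-- `delta x y = 0` if `x = y`; otherwise `delta x y` is the largest (1-based)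
index at which `x` and `y` differ. -/
def delta {d : ℕ} {n : ℕ → ℕ} (x y : Vx d n) : ℕ :=
  (Finset.univ.filter fun i => x i ≠ y i).sup fun i => (i : ℕ) + 1

/-- The `i`-th adjacency matrix of the wreath product: `(A i) x y = 1` iff `delta x y = i`. -/
noncomputable def A (d : ℕ) (n : ℕ → ℕ) (i : ℕ) : Matrix (Vx d n) (Vx d n) ℂ :=
  Matrix.of fun x y => if delta x y = i then 1 else 0

/-- The valencies: `k 0 = 1` and, for `1 ≤ i`, `k i = n_1 ⋯ n_{i-1} (n_i - 1)`,
i.e. `k i = n 0 ⋯ n (i-2) * (n (i-1) - 1)`. -/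
def k (n : ℕ → ℕ) (i : ℕ) : ℕ :=
  if i = 0 then 1 else (∏ j ∈ Finset.range (i - 1), n j) * (n (i - 1) - 1)

/-- The dual idempotent `E_i*` with respect to the base point `x₀`: the diagonal
0-1 matrix with `(E_i*)_{yy} = 1` iff `delta x₀ y = i`. -/
noncomputable def Es {d : ℕ} {n : ℕ → ℕ} (x₀ : Vx d n) (i : ℕ) :
    Matrix (Vx d n) (Vx d n) ℂ :=
  Matrix.of fun y z => if y = z ∧ delta x₀ y = i then 1 else 0

/-- The all-ones matrix `J`. -/
noncomputable def Jm (d : ℕ) (n : ℕ → ℕ) : Matrix (Vx d n) (Vx d n) ℂ :=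
  Matrix.of fun _ _ => 1

/-- The matrices `G i j`. -/
noncomputable def G {d : ℕ} {n : ℕ → ℕ} (x₀ : Vx d n) (i j : ℕ) :
    Matrix (Vx d n) (Vx d n) ℂ :=
  if i < j then ((k n j : ℂ))⁻¹ • (Es x₀ i * A d n j * Es x₀ j)
  else if j < i then ((k n j : ℂ))⁻¹ • (Es x₀ i * A d n i * Es x₀ j)
  else ((k n i : ℂ))⁻¹ • (Es x₀ i * Jm d n * Es x₀ i)

/-- The span `U` of the matrices `G i j`, `i, j ∈ [d]`. -/
noncomputable def Uspan {d : ℕ} {n : ℕ → ℕ} (x₀ : Vx d n) :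
    Submodule ℂ (Matrix (Vx d n) (Vx d n) ℂ) :=
  Submodule.span ℂ (Set.range fun p : Fin (d + 1) × Fin (d + 1) => G x₀ p.1 p.2)

/-- The Terwilliger algebra of the wreath product with respect to `x₀`. -/
noncomputable def Ter {d : ℕ} {n : ℕ → ℕ} (x₀ : Vx d n) :
    Subalgebra ℂ (Matrix (Vx d n) (Vx d n) ℂ) :=
  Algebra.adjoin ℂ
    ((Set.range fun i : Fin (d + 1) => A d n i) ∪ (Set.range fun i : Fin (d + 1) => Es x₀ i))

/-- The matrices `F i h`, for `1 ≤ i ≤ d` and `0 ≤ h ≤ i - 1`. -/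
noncomputable def F {d : ℕ} {n : ℕ → ℕ} (x₀ : Vx d n) (i h : ℕ) :
    Matrix (Vx d n) (Vx d n) ℂ :=
  if h < i - 1 then
    (∑ j ∈ Finset.range (h + 1), (k n j : ℂ))⁻¹ •
        (∑ j ∈ Finset.range (h + 1), Es x₀ i * A d n j * Es x₀ i)
      - (∑ j ∈ Finset.range (h + 2), (k n j : ℂ))⁻¹ •
          (∑ j ∈ Finset.range (h + 2), Es x₀ i * A d n j * Es x₀ i)
  else
    (∑ j ∈ Finset.range i, (k n j : ℂ))⁻¹ •
        (∑ j ∈ Finset.range i, Es x₀ i * A d n j * Es x₀ i)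
      - G x₀ i i

/-!
The space `U` consists of the matrices whose `(y, z)` entry depends only on `δ(x₀, y)` and
`δ(x₀, z)`. As `δ` is an ultrametric, `δ(y, z) = max (δ(x₀, y)) (δ(x₀, z))` whenever
`δ(x₀, y) ≠ δ(x₀, z)`, so off the diagonal blocks each `A_i` already looks like an element of `U`.
Diagonal blocks are invisible to `A_i E_j* - E_j* A_i`, which therefore lies in `U`, and they enter
`A_i M` for `M ∈ U` only through the row sums of `A_i`, which are constant. Finally, any two
vertices are exchanged by an automorphism of the scheme, so the `A_i` are symmetric and commute.
-/

section Adjoin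

section Semiring

variable {R B : Type*} [CommSemiring R] [Semiring B] [Algebra R B] {S : Set B} {U : Submodule R B}

lemma mul_mem_of_mem_adjoin_left (hS : ∀ s ∈ S, ∀ u ∈ U, s * u ∈ U) {t : B}
    (ht : t ∈ Algebra.adjoin R S) : ∀ u ∈ U, t * u ∈ U := by
  induction ht using Algebra.adjoin_induction with
  | mem s hs => exact hS s hs
  | algebraMap r =>
    intro u hu
    rw [← Algebra.smul_def]
    exact U.smul_mem r hu
  | add a b _ _ ha hb =>
    intro u hu
    rw [add_mul]
    exact U.add_mem (ha u hu) (hb u hu)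
  | mul a b _ _ ha hb =>
    intro u hu
    rw [mul_assoc]
    exact ha _ (hb u hu)

lemma mul_mem_of_mem_adjoin_right (hS : ∀ s ∈ S, ∀ u ∈ U, u * s ∈ U) {t : B}
    (ht : t ∈ Algebra.adjoin R S) : ∀ u ∈ U, u * t ∈ U := by
  induction ht using Algebra.adjoin_induction with
  | mem s hs => exact hS s hs
  | algebraMap r =>
    intro u hu
    rw [← Algebra.commutes, ← Algebra.smul_def]
    exact U.smul_mem r hu
  | add a b _ _ ha hb =>
    intro u hu
    rw [mul_add]
    exact U.add_mem (ha u hu) (hb u hu)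
  | mul a b _ _ ha hb =>
    intro u hu
    rw [← mul_assoc]
    exact hb _ (ha u hu)

end Semiring

variable {R B : Type*} [CommRing R] [Ring B] [Algebra R B] {S : Set B} {U : Submodule R B}

lemma commutator_mem_of_mem_adjoin_right (hl : ∀ s ∈ S, ∀ u ∈ U, s * u ∈ U)
    (hr : ∀ s ∈ S, ∀ u ∈ U, u * s ∈ U) {b t : B} (hb : ∀ s ∈ S, b * s - s * b ∈ U)
    (ht : t ∈ Algebra.adjoin R S) : b * t - t * b ∈ U := by
  induction ht using Algebra.adjoin_induction with
  | mem s hs => exact hb s hs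
  | algebraMap r => simp [Algebra.commutes]
  | add x y _ _ hx hy =>
    have additivity : b * (x + y) - (x + y) * b = (b * x - x * b) + (b * y - y * b) := by
      noncomm_ring
    rw [additivity]
    exact U.add_mem hx hy
  | mul x y hxS hyS hx hy =>
    have leibniz : b * (x * y) - x * y * b = (b * x - x * b) * y + x * (b * y - y * b) := by
      noncomm_ring
    rw [leibniz]
    exact U.add_mem (mul_mem_of_mem_adjoin_right hr hyS _ hx)
      (mul_mem_of_mem_adjoin_left hl hxS _ hy)

lemma commutator_mem_of_mem_adjoin (hl : ∀ s ∈ S, ∀ u ∈ U, s * u ∈ U)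
    (hr : ∀ s ∈ S, ∀ u ∈ U, u * s ∈ U) (hS : ∀ s ∈ S, ∀ t ∈ S, s * t - t * s ∈ U) {s t : B}
    (hs : s ∈ Algebra.adjoin R S) (ht : t ∈ Algebra.adjoin R S) : s * t - t * s ∈ U := by
  refine commutator_mem_of_mem_adjoin_right hl hr (fun g hg => ?_) ht
  rw [← neg_sub]
  exact U.neg_mem (commutator_mem_of_mem_adjoin_right hl hr (hS g hg) hs)

end Adjoin

section PermInvariant

variable {X R : Type*}

lemma isSymm_of_forall_exists_swap {M : Matrix X X R}
    (h : ∀ y z, ∃ σ : Equiv.Perm X, σ y = z ∧ σ z = y ∧ M.submatrix σ σ = M) : M.IsSymm := by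
  ext y z
  obtain ⟨σ, hy, hz, hM⟩ := h y z
  calc M z y = M (σ y) (σ z) := by rw [hy, hz]
    _ = M y z := congr_fun₂ hM y z

variable [Fintype X]

lemma commute_of_forall_exists_swap [CommSemiring R] {M N : Matrix X X R}
    (h : ∀ y z, ∃ σ : Equiv.Perm X,
      σ y = z ∧ σ z = y ∧ M.submatrix σ σ = M ∧ N.submatrix σ σ = N) : Commute M N := by
  have hM : M.IsSymm := isSymm_of_forall_exists_swap fun y z =>
    let ⟨σ, hy, hz, hσM, _⟩ := h y z
    ⟨σ, hy, hz, hσM⟩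
  have hN : N.IsSymm := isSymm_of_forall_exists_swap fun y z =>
    let ⟨σ, hy, hz, _, hσN⟩ := h y z
    ⟨σ, hy, hz, hσN⟩
  have hMN : (M * N).IsSymm := isSymm_of_forall_exists_swap fun y z =>
    let ⟨σ, hy, hz, hσM, hσN⟩ := h y z
    ⟨σ, hy, hz, by rw [← Matrix.submatrix_mul_equiv M N σ σ σ, hσM, hσN]⟩
  calc M * N = (M * N)ᵀ := hMN.symm
    _ = N * M := by rw [Matrix.transpose_mul, hM, hN]

lemma sum_row_apply_eq_of_submatrix_eq [AddCommMonoid R] {M : Matrix X X R} {σ : Equiv.Perm X}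
    (hM : M.submatrix σ σ = M) (y : X) : ∑ w, M (σ y) w = ∑ w, M y w :=
  calc ∑ w, M (σ y) w = ∑ w, M (σ y) (σ w) := (Equiv.sum_comp σ _).symm
    _ = ∑ w, M y w := Finset.sum_congr rfl fun w _ => congr_fun₂ hM y w

end PermInvariant

section BlockConst

variable {X ι R : Type*} {f : X → ι}

variable (R f) in
/-- The matrices that are constant on each block `f ⁻¹' {i} × f ⁻¹' {j}`. For `f = delta x₀` this
is the coordinate-free description of `Uspan x₀`. -/
def blockConst [Semiring R] : Submodule R (Matrix X X R) where
  carrier := {M | ∀ ⦃y y' z z'⦄, f y = f y' → f z = f z' → M y z = M y' z'}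
  zero_mem' _ _ _ _ _ _ := rfl
  add_mem' hM hN _ _ _ _ hy hz := congr_arg₂ (· + ·) (hM hy hz) (hN hy hz)
  smul_mem' c _ hM _ _ _ _ hy hz := congr_arg (c • ·) (hM hy hz)

/-- `M` is constant on each off-diagonal block `f ⁻¹' {i} × f ⁻¹' {j}`, `i ≠ j`; nothing is required
of the diagonal blocks. -/
def IsOffBlockConst (f : X → ι) (M : Matrix X X R) : Prop :=
  ∀ ⦃y y' z z'⦄, f y ≠ f z → f y = f y' → f z = f z' → M y z = M y' z'

lemma exists_eq_submatrix_of_mem_blockConst [Semiring R] {M : Matrix X X R}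
    (hM : M ∈ blockConst R f) :
    ∃ C : Matrix ι ι R, M = C.submatrix f f := by
  have factors : (Function.uncurry M).FactorsThrough (Prod.map f f) := by
    rintro ⟨y, z⟩ ⟨y', z'⟩ h
    exact hM (congr_arg Prod.fst h) (congr_arg Prod.snd h)
  obtain ⟨c, hc⟩ := (Function.factorsThrough_iff _).1 factors
  exact ⟨Function.curry c, by ext y z; exact congr_fun hc (y, z)⟩

lemma transpose_mem_blockConst [Semiring R] {M : Matrix X X R} (hM : M ∈ blockConst R f) :
    Mᵀ ∈ blockConst R f :=
  fun _ _ _ _ hy hz => hM hz hy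

variable [Fintype X]

lemma mul_mem_blockConst [Ring R] {N M : Matrix X X R} (hN : IsOffBlockConst f N)
    (hrow : ∀ y y', f y = f y' → ∑ w, N y w = ∑ w, N y' w) (hM : M ∈ blockConst R f) :
    N * M ∈ blockConst R f := by
  -- Subtracting `M y z` kills the terms of the diagonal block of `y`.
  have split (y z : X) :
      (N * M) y z = ∑ w, N y w * (M w z - M y z) + (∑ w, N y w) * M y z := by
    rw [Matrix.mul_apply, Finset.sum_mul, ← Finset.sum_add_distrib]
    exact Finset.sum_congr rfl fun w _ => by rw [mul_sub, sub_add_cancel]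
  intro y y' z z' hy hz
  rw [split, split, hrow y y' hy, hM hy hz]
  congr 1
  refine Finset.sum_congr rfl fun w _ => ?_
  rw [hM (rfl : f w = f w) hz]
  by_cases hw : f y = f w
  · rw [hM (hw.symm.trans hy) rfl, sub_self, mul_zero, mul_zero]
  · rw [hN hw hy rfl]

variable [DecidableEq X]

lemma diagonal_comp_mul_mem_blockConst [Semiring R] (g : ι → R) {M : Matrix X X R}
    (hM : M ∈ blockConst R f) : Matrix.diagonal (g ∘ f) * M ∈ blockConst R f := by
  intro y y' z z' hy hz
  simp only [Matrix.diagonal_mul, Function.comp_apply, hy, hM hy hz]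

lemma commutator_diagonal_comp_mem_blockConst [CommRing R] (g : ι → R) {N : Matrix X X R}
    (hN : IsOffBlockConst f N) :
    N * Matrix.diagonal (g ∘ f) - Matrix.diagonal (g ∘ f) * N ∈ blockConst R f := by
  have entry (y z : X) :
      (N * Matrix.diagonal (g ∘ f) - Matrix.diagonal (g ∘ f) * N) y z =
        N y z * (g (f z) - g (f y)) := by
    rw [Matrix.sub_apply, Matrix.mul_diagonal, Matrix.diagonal_mul]
    simp only [Function.comp_apply]
    ring
  intro y y' z z' hy hz
  rw [entry, entry, ← hy, ← hz]
  by_cases hyz : f y = f z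
  · rw [hyz, sub_self, mul_zero, mul_zero]
  · rw [hN hyz hy hz]

end BlockConst

section Delta

variable {d : ℕ} {n : ℕ → ℕ}

lemma delta_le_iff {x y : Vx d n} {m : ℕ} :
    delta x y ≤ m ↔ ∀ i : Fin d, m ≤ i → x i = y i := by
  simp only [delta, Finset.sup_le_iff, Finset.mem_filter, Finset.mem_univ, true_and,
    Nat.succ_le_iff]
  exact forall_congr' fun i => by rw [← not_lt, ← not_imp_not, not_not]

lemma delta_comm (x y : Vx d n) : delta x y = delta y x := by
  simp only [delta, ne_comm]

lemma delta_le (x y : Vx d n) : delta x y ≤ d :=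
  delta_le_iff.2 fun i hi => absurd i.isLt hi.not_gt

lemma delta_le_max (x y z : Vx d n) : delta x z ≤ max (delta x y) (delta y z) :=
  delta_le_iff.2 fun i hi =>
    (delta_le_iff.1 (le_max_left _ _) i hi).trans (delta_le_iff.1 (le_max_right _ _) i hi)

lemma delta_eq_max_of_ne {x y z : Vx d n} (h : delta x y ≠ delta x z) :
    delta y z = max (delta x y) (delta x z) := by
  have hyz := delta_le_max y x z
  have hxz := delta_le_max x y z
  have hxy := delta_le_max x z y
  rw [delta_comm y x] at hyz
  rw [delta_comm z y] at hxy
  omega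

/-- The permutation of the vertices that exchanges `y i` and `z i` in every coordinate `i`: an
automorphism of the scheme that exchanges `y` and `z`. -/
def coordSwap (y z : Vx d n) : Equiv.Perm (Vx d n) :=
  Equiv.piCongrRight fun i => Equiv.swap (y i) (z i)

lemma coordSwap_apply_left (y z : Vx d n) : coordSwap y z y = z :=
  funext fun _ => Equiv.swap_apply_left _ _

lemma coordSwap_apply_right (y z : Vx d n) : coordSwap y z z = y :=
  funext fun _ => Equiv.swap_apply_right _ _

lemma delta_coordSwap (y z v w : Vx d n) :
    delta (coordSwap y z v) (coordSwap y z w) = delta v w := by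
  simp [delta, coordSwap]

end Delta

section Generators

variable {d : ℕ} {n : ℕ → ℕ}

lemma A_submatrix_coordSwap (i : ℕ) (y z : Vx d n) :
    (A d n i).submatrix (coordSwap y z) (coordSwap y z) = A d n i := by
  ext v w
  simp only [Matrix.submatrix_apply, A, Matrix.of_apply, delta_coordSwap]

lemma A_isSymm (i : ℕ) : (A d n i).IsSymm :=
  isSymm_of_forall_exists_swap fun y z => ⟨coordSwap y z, coordSwap_apply_left y z,
    coordSwap_apply_right y z, A_submatrix_coordSwap i y z⟩

lemma A_commute (i j : ℕ) : Commute (A d n i) (A d n j) :=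
  commute_of_forall_exists_swap fun y z => ⟨coordSwap y z, coordSwap_apply_left y z,
    coordSwap_apply_right y z, A_submatrix_coordSwap i y z, A_submatrix_coordSwap j y z⟩

lemma A_sum_row_eq (i : ℕ) (y y' : Vx d n) : ∑ w, A d n i y w = ∑ w, A d n i y' w := by
  rw [← sum_row_apply_eq_of_submatrix_eq (A_submatrix_coordSwap i y y') y, coordSwap_apply_left]

lemma A_isOffBlockConst (x₀ : Vx d n) (i : ℕ) : IsOffBlockConst (delta x₀) (A d n i) := by
  intro y y' z z' hyz hy hz
  have hyz' : delta x₀ y' ≠ delta x₀ z' := by rwa [← hy, ← hz]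
  simp only [A, Matrix.of_apply, delta_eq_max_of_ne hyz, delta_eq_max_of_ne hyz', hy, hz]

lemma Es_eq_diagonal (x₀ : Vx d n) (i : ℕ) :
    Es x₀ i = Matrix.diagonal (Pi.single i 1 ∘ delta x₀) := by
  ext y z
  simp only [Es, Matrix.of_apply, Matrix.diagonal_apply, Function.comp_apply, Pi.single_apply,
    ite_and]

lemma Es_commute (x₀ : Vx d n) (i j : ℕ) : Commute (Es x₀ i) (Es x₀ j) := by
  rw [Es_eq_diagonal, Es_eq_diagonal]
  exact Matrix.commute_diagonal _ _

lemma Es_mul_mul_Es_apply (x₀ : Vx d n) (i j : ℕ) (M : Matrix (Vx d n) (Vx d n) ℂ)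
    (y z : Vx d n) :
    (Es x₀ i * M * Es x₀ j) y z = if delta x₀ y = i ∧ delta x₀ z = j then M y z else 0 := by
  rw [Es_eq_diagonal, Es_eq_diagonal, Matrix.mul_diagonal, Matrix.diagonal_mul]
  simp [Pi.single_apply, ← ite_and, and_comm]

variable {x₀ : Vx d n} {M : Matrix (Vx d n) (Vx d n) ℂ}

lemma A_mul_mem_blockConst (i : ℕ) (hM : M ∈ blockConst ℂ (delta x₀)) :
    A d n i * M ∈ blockConst ℂ (delta x₀) :=
  mul_mem_blockConst (A_isOffBlockConst x₀ i) (fun y y' _ => A_sum_row_eq i y y') hM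

lemma Es_mul_mem_blockConst (i : ℕ) (hM : M ∈ blockConst ℂ (delta x₀)) :
    Es x₀ i * M ∈ blockConst ℂ (delta x₀) := by
  rw [Es_eq_diagonal]
  exact diagonal_comp_mul_mem_blockConst _ hM

lemma mul_A_mem_blockConst (i : ℕ) (hM : M ∈ blockConst ℂ (delta x₀)) :
    M * A d n i ∈ blockConst ℂ (delta x₀) := by
  rw [← Matrix.transpose_transpose (M * A d n i), Matrix.transpose_mul, A_isSymm]
  exact transpose_mem_blockConst (A_mul_mem_blockConst i (transpose_mem_blockConst hM))

lemma mul_Es_mem_blockConst (i : ℕ) (hM : M ∈ blockConst ℂ (delta x₀)) :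
    M * Es x₀ i ∈ blockConst ℂ (delta x₀) := by
  have hEs : (Es x₀ i)ᵀ = Es x₀ i := by rw [Es_eq_diagonal, Matrix.diagonal_transpose]
  rw [← Matrix.transpose_transpose (M * Es x₀ i), Matrix.transpose_mul, hEs]
  exact transpose_mem_blockConst (Es_mul_mem_blockConst i (transpose_mem_blockConst hM))

lemma commutator_A_Es_mem_blockConst (i j : ℕ) :
    A d n i * Es x₀ j - Es x₀ j * A d n i ∈ blockConst ℂ (delta x₀) := by
  rw [Es_eq_diagonal]
  exact commutator_diagonal_comp_mem_blockConst _ (A_isOffBlockConst x₀ i)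

end Generators

section Uspan

variable {d : ℕ} {n : ℕ → ℕ}

lemma k_ne_zero (hn : ∀ i < d, 2 ≤ n i) {j : ℕ} (hj : j ≤ d) : k n j ≠ 0 := by
  obtain _ | m := j
  · simp [k]
  · have hprod : ∏ i ∈ Finset.range m, n i ≠ 0 := Finset.prod_ne_zero_iff.2 fun i hi => by
      have := hn i ((Finset.mem_range.1 hi).trans hj)
      omega
    have hlast : n m - 1 ≠ 0 := by
      have := hn m hj
      omega
    exact mul_ne_zero hprod hlast

lemma G_apply (x₀ : Vx d n) (i j : ℕ) (y z : Vx d n) :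
    G x₀ i j y z = if delta x₀ y = i ∧ delta x₀ z = j then (k n j : ℂ)⁻¹ else 0 := by
  by_cases hyz : delta x₀ y = i ∧ delta x₀ z = j
  · obtain ⟨rfl, rfl⟩ := hyz
    rcases lt_trichotomy (delta x₀ y) (delta x₀ z) with hlt | heq | hlt
    · simp [G, hlt, Es_mul_mul_Es_apply, A, delta_eq_max_of_ne hlt.ne, hlt.le]
    · simp [G, heq, Es_mul_mul_Es_apply, Jm]
    · simp [G, hlt, hlt.not_gt, Es_mul_mul_Es_apply, A, delta_eq_max_of_ne hlt.ne', hlt.le]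
  · rw [if_neg hyz]
    rcases lt_trichotomy i j with hlt | rfl | hlt
    · simp [G, hlt, Es_mul_mul_Es_apply, hyz]
    · simp [G, Es_mul_mul_Es_apply, hyz]
    · simp [G, hlt, hlt.not_gt, Es_mul_mul_Es_apply, hyz]

lemma Uspan_le_blockConst (x₀ : Vx d n) : Uspan x₀ ≤ blockConst ℂ (delta x₀) := by
  refine Submodule.span_le.2 ?_
  rintro _ ⟨p, rfl⟩ y y' z z' hy hz
  simp only [G_apply, hy, hz]

lemma blockConst_le_Uspan (hn : ∀ i < d, 2 ≤ n i) (x₀ : Vx d n) :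
    blockConst ℂ (delta x₀) ≤ Uspan x₀ := by
  intro M hM
  obtain ⟨C, rfl⟩ := exists_eq_submatrix_of_mem_blockConst hM
  have expansion : C.submatrix (delta x₀) (delta x₀) =
      ∑ i ∈ Finset.range (d + 1), ∑ j ∈ Finset.range (d + 1), (C i j * k n j) • G x₀ i j := by
    ext y z
    have hk : (k n (delta x₀ z) : ℂ) ≠ 0 := Nat.cast_ne_zero.2 (k_ne_zero hn (delta_le x₀ z))
    simp [Matrix.sum_apply, G_apply, ite_and, delta_le, hk]
  rw [expansion]
  refine Submodule.sum_mem _ fun i hi => Submodule.sum_mem _ fun j hj => Submodule.smul_mem _ _ ?_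
  exact Submodule.subset_span ⟨(⟨i, Finset.mem_range.1 hi⟩, ⟨j, Finset.mem_range.1 hj⟩), rfl⟩

lemma Uspan_eq_blockConst (hn : ∀ i < d, 2 ≤ n i) (x₀ : Vx d n) :
    Uspan x₀ = blockConst ℂ (delta x₀) :=
  (Uspan_le_blockConst x₀).antisymm (blockConst_le_Uspan hn x₀)

end Uspan

/-- `U` is a two-sided ideal of the Terwilliger algebra `T(x₀)`, and the
quotient `T(x₀)/U` is commutative: `S T - T S ∈ U` for all `S, T ∈ T(x₀)`. -/
theorem stmt5 (d : ℕ) (hd : 1 ≤ d) (n : ℕ → ℕ) (hn : ∀ i < d, 2 ≤ n i)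
    (x₀ : Vx d n) :
    (∀ t ∈ Ter x₀, ∀ u ∈ Uspan x₀, t * u ∈ Uspan x₀ ∧ u * t ∈ Uspan x₀) ∧
    (∀ s ∈ Ter x₀, ∀ t ∈ Ter x₀, s * t - t * s ∈ Uspan x₀) := by
  rw [Uspan_eq_blockConst hn x₀, Ter]
  set S := (Set.range fun i : Fin (d + 1) => A d n i) ∪ Set.range fun i : Fin (d + 1) => Es x₀ i
  have left_mem : ∀ s ∈ S, ∀ u ∈ blockConst ℂ (delta x₀), s * u ∈ blockConst ℂ (delta x₀) := by
    rintro _ (⟨i, rfl⟩ | ⟨i, rfl⟩) u hu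
    · exact A_mul_mem_blockConst i hu
    · exact Es_mul_mem_blockConst i hu
  have right_mem : ∀ s ∈ S, ∀ u ∈ blockConst ℂ (delta x₀), u * s ∈ blockConst ℂ (delta x₀) := by
    rintro _ (⟨i, rfl⟩ | ⟨i, rfl⟩) u hu
    · exact mul_A_mem_blockConst i hu
    · exact mul_Es_mem_blockConst i hu
  have commutator_mem : ∀ s ∈ S, ∀ t ∈ S, s * t - t * s ∈ blockConst ℂ (delta x₀) := by
    rintro _ (⟨i, rfl⟩ | ⟨i, rfl⟩) _ (⟨j, rfl⟩ | ⟨j, rfl⟩)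
    · simp [(A_commute (d := d) (n := n) i j).eq]
    · exact commutator_A_Es_mem_blockConst i j
    · exact neg_sub (A d n j * Es x₀ i) _ ▸
        Submodule.neg_mem _ (commutator_A_Es_mem_blockConst j i)
    · simp [(Es_commute x₀ i j).eq]
  exact ⟨fun t ht u hu => ⟨mul_mem_of_mem_adjoin_left left_mem ht u hu,
      mul_mem_of_mem_adjoin_right right_mem ht u hu⟩,
    fun s hs t ht => commutator_mem_of_mem_adjoin left_mem right_mem commutator_mem hs ht⟩
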